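/- arXiv:q-alg/9710007 — 2 statements merged into one kernel-verified Lean document; each statement's English description precedes it below -/
import Mathlib

section
/- Let Λ ∈ P_l^+, p ∈ 𝒫(Λ) and λ = λ(p) its highest-lift. Then p_0 = Λ − ∑_{r ∈ ℤ/nℤ} N^r(λ)α′_r, and E(p) = N^0(λ). (Equivalently, the weight of the highest-lift multipartition λ(p) equals the weight of the path p.) -/
/-!
Record column `k + 1` of `λ` by its profile `x_j(k) = v_j + k - λ^{(j)′}_{k+1}`. In these terms `λ`
is a cylindrical multipartition exactly when each profile, extended to `j ∈ ℤ` by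
`x_{j+l} = x_j + n`, is weakly increasing, and `x_j(k) < x_j(k+1)` for all `j`. The `k`-th step of
`π(λ)` is the step weight of the residue counting function of `x(k)`, so it is unchanged when the
profile is shifted cyclically, `x_j ↦ x_{j+1}`.

Maximality of the highest-lift says that no single column can be shifted in this way: for every `k`
some `j` satisfies `x_j(k+1) ≤ x_{j+1}(k)` (`exists_le_cshift`). The ground-state profiles
`v_j + k` have the same property.

Under this condition `H` of two consecutive steps equals `∑_j (⌊x_j(k+1)/n⌋ - ⌊x_j(k)/n⌋)`
(`Hfun_eq`). The identity matching attains this value, because `x_j(k) < x_j(k+1) ≤ x_j(k) + n`.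
It is minimal because any matching of residues `μ`, `ν` costs at least `#{μ ≥ c} - #{ν > c}`, and
for `c` the residue of `x_j(k+1)`, with `j` the index above, this difference is the claimed sum.

The nodes of column `k + 1` have contents `x_j(k) + 1, …, v_j + k`, so the column contains
`⌊(v_j + k)/n⌋ - ⌊x_j(k)/n⌋` nodes of colour `0` in component `j` (`colCount_zero`). Summation by
parts (`abel_sum`) turns the energy into the sum of these numbers. The formula for `p 0` follows by
telescoping over the nodes of each column (`colCount_sub`) and then over the steps of the path; it
does not need maximality.
-/

open scoped BigOperators

namespace BF

/-- The fundamental weight `Λ_i`, viewed as the indicator function `ZMod n → ℤ` of `i`. -/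
def Lam (n : ℕ) (i : ZMod n) : ZMod n → ℤ := fun j => if j = i then 1 else 0

/-- A weight is dominant if all its coefficients are nonnegative. -/
def Dominant (n : ℕ) (a : ZMod n → ℤ) : Prop := ∀ i, 0 ≤ a i

/-- The step weight of `e : ZMod n → ℕ`: its `Λ_j`-coefficient is `e (j-1) - e j`. -/
def stepWt (n : ℕ) (e : ZMod n → ℕ) : ZMod n → ℤ := fun j => (e (j - 1) : ℤ) - (e j : ℤ)

/-- Membership in `A_l^+`: `d` is the step weight of some `e : ZMod n → ℕ` of total sum `l`. -/
def InA (n : ℕ) [NeZero n] (l : ℕ) (d : ZMod n → ℤ) : Prop :=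
  ∃ e : ZMod n → ℕ, (∑ i, e i) = l ∧ d = stepWt n e

/-- The ground-state path of the weight `Λ`: `p̄_k (i) = Λ (i - k)`,
which is the coefficient form of `p̄_k = Λ_{v₀+k} + ⋯ + Λ_{v_{l-1}+k}`. -/
def gsp (n : ℕ) (Λ : ZMod n → ℤ) (k : ℕ) : ZMod n → ℤ := fun i => Λ (i - (k : ZMod n))

/-- `p` is a `Λ`-path of level `l`. -/
def IsPath (n : ℕ) [NeZero n] (l : ℕ) (Λ : ZMod n → ℤ) (p : ℕ → ZMod n → ℤ) : Prop :=
  (∀ k, InA n l (fun i => p (k + 1) i - p k i)) ∧ ∃ K, ∀ k ≥ K, p k = gsp n Λ k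

/-- The length of a `Λ`-path: least `K` with `p k = p̄ k` for all `k ≥ K`. -/
noncomputable def pathLen (n : ℕ) (Λ : ZMod n → ℤ) (p : ℕ → ZMod n → ℤ) : ℕ :=
  sInf {K | ∀ k ≥ K, p k = gsp n Λ k}

/-- `f : ℕ → ℕ` is a partition (rows are indexed from `0`). -/
def IsPartitionF (f : ℕ → ℕ) : Prop := (∀ i, f (i + 1) ≤ f i) ∧ ∃ N, ∀ i ≥ N, f i = 0

/-- An `l`-multipartition. -/
def IsMP (l : ℕ) (lam : Fin l → ℕ → ℕ) : Prop := ∀ j, IsPartitionF (lam j)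

/-- The data `v : Fin l → ℕ` of a decomposition `Λ = Λ_{v 0} + ⋯ + Λ_{v (l-1)}`
with `0 ≤ v 0 ≤ ⋯ ≤ v (l-1) < n`. -/
def SortedV (n l : ℕ) (v : Fin l → ℕ) : Prop := Monotone v ∧ ∀ j, v j < n

/-- The weight `Λ = Λ_{v 0} + ⋯ + Λ_{v (l-1)}` determined by `v`. -/
def wtOf (n : ℕ) {l : ℕ} (v : Fin l → ℕ) : ZMod n → ℤ :=
  fun i => ((Finset.univ.filter fun j : Fin l => ((v j : ZMod n) = i)).card : ℤ)

/-- The colour of the node in (0-based) row `i`, (1-based) column `c` of component `j`: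
`(c - (i+1) + v j) mod n`. -/
def colour (n : ℕ) {l : ℕ} (v : Fin l → ℕ) (j : Fin l) (i c : ℕ) : ZMod n :=
  (c : ZMod n) - (i : ZMod n) - 1 + (v j : ZMod n)

/-- `N^r(λ)`: the total number of nodes of colour `r` in the multipartition `λ`. -/
noncomputable def Ncolour (n : ℕ) {l : ℕ} (v : Fin l → ℕ) (lam : Fin l → ℕ → ℕ)
    (r : ZMod n) : ℕ :=
  Nat.card {x : Fin l × ℕ × ℕ //
    1 ≤ x.2.2 ∧ x.2.2 ≤ lam x.1 x.2.1 ∧ colour n v x.1 x.2.1 x.2.2 = r}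

/-- The height `f′_m` of the `m`-th column of the partition `f`. -/
noncomputable def colHt (f : ℕ → ℕ) (m : ℕ) : ℕ := Nat.card {i : ℕ // m ≤ f i}

/-- The function `e` whose step weight is the `k`-th step of `π(λ)`:
`e i = #{j : v j + k - λ^{(j)′}_{k+1} ≡ i mod n}`. -/
noncomputable def eFun (n : ℕ) {l : ℕ} (v : Fin l → ℕ) (lam : Fin l → ℕ → ℕ) (k : ℕ) :
    ZMod n → ℕ :=
  fun i => Nat.card {j : Fin l //
    (v j : ZMod n) + (k : ZMod n) - (colHt (lam j) (k + 1) : ZMod n) = i}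

/-- `p = π(λ)` where `λ` is an `l`-multipartition of highest weight `wtOf n v`. -/
def IsPi (n : ℕ) {l : ℕ} (v : Fin l → ℕ) (lam : Fin l → ℕ → ℕ)
    (p : ℕ → ZMod n → ℤ) : Prop :=
  (∀ k, (fun i => p (k + 1) i - p k i) = stepWt n (eFun n v lam k)) ∧
  ∃ K, ∀ k ≥ K, p k = gsp n (wtOf n v) k

/-- `λ` is cylindrical of highest weight `Λ = wtOf n v`. -/
def Cylindrical (n : ℕ) {l : ℕ} (v : Fin l → ℕ) (lam : Fin l → ℕ → ℕ) : Prop :=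
  (∀ (j : ℕ) (hj : j + 1 < l) (i : ℕ),
      lam ⟨j + 1, hj⟩ (i + (v ⟨j + 1, hj⟩ - v ⟨j, Nat.lt_of_succ_lt hj⟩)) ≤
        lam ⟨j, Nat.lt_of_succ_lt hj⟩ i) ∧
  ∀ (hl : 0 < l) (i : ℕ),
      lam ⟨0, hl⟩ (i + (n + v ⟨0, hl⟩ - v ⟨l - 1, Nat.sub_lt hl Nat.one_pos⟩)) ≤
        lam ⟨l - 1, Nat.sub_lt hl Nat.one_pos⟩ i

/-- `λ` is higher than `μ`: every column of each component of `λ` is at most as high as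
the corresponding column of `μ`. -/
def Higher {l : ℕ} (lam mu : Fin l → ℕ → ℕ) : Prop :=
  ∀ (j : Fin l) (k : ℕ), 1 ≤ k → colHt (lam j) k ≤ colHt (mu j) k

/-- `λ` is the highest-lift of the path `p`: it is a cylindrical multipartition with
`π(λ) = p` which is higher than every cylindrical multipartition mapping to `p`. -/
def IsHL (n : ℕ) {l : ℕ} (v : Fin l → ℕ) (lam : Fin l → ℕ → ℕ)
    (p : ℕ → ZMod n → ℤ) : Prop :=
  IsMP l lam ∧ Cylindrical n v lam ∧ IsPi n v lam p ∧
    ∀ mu : Fin l → ℕ → ℕ, IsMP l mu → Cylindrical n v mu → IsPi n v mu p → Higher lam mu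

/-- `λ ∈ 𝒴(Λ)` with `Λ = wtOf n v`. -/
def InY (n : ℕ) {l : ℕ} (v : Fin l → ℕ) (lam : Fin l → ℕ → ℕ) : Prop :=
  ∃ p, IsHL n v lam p

/-- `α′_r = -Λ_{r-1} + 2Λ_r - Λ_{r+1}`. -/
def alphaP (n : ℕ) (r : ZMod n) : ZMod n → ℤ :=
  fun i => -(Lam n (r - 1) i) + 2 * Lam n r i - Lam n (r + 1) i

/-- `ψ_r(k)`: the number of length-`k` rows of `λ` whose right end has colour `r`. -/
noncomputable def psiCount (n : ℕ) {l : ℕ} (v : Fin l → ℕ) (lam : Fin l → ℕ → ℕ)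
    (k : ℕ) (r : ZMod n) : ℕ :=
  Nat.card {x : Fin l × ℕ // lam x.1 x.2 = k ∧ colour n v x.1 x.2 k = r}

/-- The number of length-`k` rows of `λ` whose left end has colour `r`. -/
noncomputable def leftCount (n : ℕ) {l : ℕ} (v : Fin l → ℕ) (lam : Fin l → ℕ → ℕ)
    (k : ℕ) (r : ZMod n) : ℕ :=
  Nat.card {x : Fin l × ℕ // lam x.1 x.2 = k ∧ colour n v x.1 x.2 1 = r}

/-- The total number of length-`k` rows of `λ`. -/
noncomputable def rowCount {l : ℕ} (lam : Fin l → ℕ → ℕ) (k : ℕ) : ℕ :=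
  Nat.card {x : Fin l × ℕ // lam x.1 x.2 = k}

/-- `m_r(k)`: the number of `r`-nodes of `λ` in column `k` or to its right. -/
noncomputable def mCount (n : ℕ) {l : ℕ} (v : Fin l → ℕ) (lam : Fin l → ℕ → ℕ)
    (k : ℕ) (r : ZMod n) : ℕ :=
  Nat.card {x : Fin l × ℕ × ℕ //
    k ≤ x.2.2 ∧ x.2.2 ≤ lam x.1 x.2.1 ∧ colour n v x.1 x.2.1 x.2.2 = r}

/-- `p` is a `(Λ′,Λ″)`-restricted path, where `l''` is the level of `Λ″`:
`p - Λ′ ∈ 𝒫(Λ″)` and `p_k - η̂_k` is dominant for all `k`. -/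
def IsRes (n : ℕ) [NeZero n] (l'' : ℕ) (L' L'' : ZMod n → ℤ) (p : ℕ → ZMod n → ℤ) : Prop :=
  IsPath n l'' L'' (fun k i => p k i - L' i) ∧
  ∀ k, ∃ e : ZMod n → ℕ, (∑ i, e i) = l'' ∧
    (fun i => p (k + 1) i - p k i) = stepWt n e ∧ ∀ i, (e i : ℤ) ≤ p k i

/-- The length of a restricted path: `ℓ(p) = ℓ(p - Λ′)`. -/
noncomputable def resLen (n : ℕ) (L' L'' : ZMod n → ℤ) (p : ℕ → ZMod n → ℤ) : ℕ :=
  sInf {K | ∀ k ≥ K, (fun i => p k i - L' i) = gsp n L'' k}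

/-- `♯Λ`. -/
def sharpWt (n : ℕ) (Λ : ZMod n → ℤ) : ZMod n → ℤ := fun i => Λ (-i)

/-- `♯p`: `(♯p)_k (i) = a_{k-i}(k)` where `p_k = ∑ a_i(k) Λ_i`. -/
def sharpPath (n : ℕ) (p : ℕ → ZMod n → ℤ) : ℕ → ZMod n → ℤ :=
  fun k i => p k ((k : ZMod n) - i)

/-- `θ(a) = 1` if `a ≥ 0`, `0` otherwise. -/
def theta (a : ℤ) : ℕ := if 0 ≤ a then 1 else 0

/-- The function counting the entries of `μ : Fin l → ℕ` in each class mod `n`. -/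
def cntF (n : ℕ) {l : ℕ} (μ : Fin l → ℕ) : ZMod n → ℕ :=
  fun i => (Finset.univ.filter fun j : Fin l => ((μ j : ZMod n) = i)).card

/-- The energy function `H` on `A_l^+ × A_l^+`:
`H(α,β) = min_{σ ∈ S_l} ∑_j θ(μ_j - ν_{σ(j)})` where `α`, `β` are the step weights of
`Λ_{μ_0} + ⋯ + Λ_{μ_{l-1}}`, `Λ_{ν_0} + ⋯ + Λ_{ν_{l-1}}` with `0 ≤ μ_j, ν_j < n`. -/
noncomputable def Hfun (n : ℕ) (l : ℕ) (d d' : ZMod n → ℤ) : ℕ :=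
  sInf {m | ∃ μ ν : Fin l → ℕ, (∀ j, μ j < n) ∧ (∀ j, ν j < n) ∧
    d = stepWt n (cntF n μ) ∧ d' = stepWt n (cntF n ν) ∧
    m = Finset.univ.inf' ⟨1, Finset.mem_univ 1⟩
      fun σ : Equiv.Perm (Fin l) => ∑ j, theta ((μ j : ℤ) - (ν (σ j) : ℤ))}

/-- `(j, i)` is a removable `r`-node of `λ` (node at the right end of 0-based row `i`
of component `j`). -/
def RemNode (n : ℕ) {l : ℕ} (v : Fin l → ℕ) (lam : Fin l → ℕ → ℕ) (r : ZMod n)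
    (j : Fin l) (i : ℕ) : Prop :=
  1 ≤ lam j i ∧ lam j (i + 1) < lam j i ∧ colour n v j i (lam j i) = r

/-- `(j, i)` is an addable `r`-node of `λ` (node addable at the end of 0-based row `i`
of component `j`). -/
def AddNode (n : ℕ) {l : ℕ} (v : Fin l → ℕ) (lam : Fin l → ℕ → ℕ) (r : ZMod n)
    (j : Fin l) (i : ℕ) : Prop :=
  (i = 0 ∨ lam j i < lam j (i - 1)) ∧ colour n v j i (lam j i + 1) = r

/-- The diagonal number `d = c - (i+1) + v j` of the addable/removable node
`x = (j, i, isRemovable)`. -/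
def nodeD {l : ℕ} (v : Fin l → ℕ) (lam : Fin l → ℕ → ℕ) (x : Fin l × ℕ × Bool) : ℤ :=
  (if x.2.2 then (lam x.1 x.2.1 : ℤ) else (lam x.1 x.2.1 : ℤ) + 1) - ((x.2.1 : ℤ) + 1) + (v x.1 : ℤ)

/-- The total order on addable/removable nodes: `(d,j) < (d',j')` iff `d < d'`, or
`d = d'` and `j > j'`. -/
def nodeLT {l : ℕ} (v : Fin l → ℕ) (lam : Fin l → ℕ → ℕ) (x y : Fin l × ℕ × Bool) : Prop :=
  nodeD v lam x < nodeD v lam y ∨ (nodeD v lam x = nodeD v lam y ∧ (y.1 : ℕ) < (x.1 : ℕ))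

/-- `L` is the `r`-signature of `λ`: the increasing list of all addable and removable
`r`-nodes (flag `true` = removable, `false` = addable). -/
def IsSig (n : ℕ) {l : ℕ} (v : Fin l → ℕ) (lam : Fin l → ℕ → ℕ) (r : ZMod n)
    (L : List (Fin l × ℕ × Bool)) : Prop :=
  L.Pairwise (nodeLT v lam) ∧
  ∀ x : Fin l × ℕ × Bool, x ∈ L ↔
    ((x.2.2 = true ∧ RemNode n v lam r x.1 x.2.1) ∨
      (x.2.2 = false ∧ AddNode n v lam r x.1 x.2.1))

/-- One step of the reduction procedure on signature words: delete an adjacent pair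
consisting of a removable node (`true`) immediately followed by an addable node (`false`). -/
inductive SigStep : List Bool → List Bool → Prop
  | pair (l₁ l₂ : List Bool) : SigStep (l₁ ++ true :: false :: l₂) (l₁ ++ l₂)



/-- The cyclic successor sequence of `x : Fin l → ℤ`: extending `x` to `ℤ` by
`x (j + l) = x j + n`, this is `j ↦ x (j + 1)`. -/
def cshift (n : ℕ) {l : ℕ} (x : Fin l → ℤ) : Fin l → ℤ :=
  fun j => if h : (j : ℕ) + 1 < l then x ⟨j + 1, h⟩ else x ⟨0, j.pos⟩ + n

/-- A column profile is cylindrical if its extension to `ℤ` by `x (j + l) = x j + n` is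
weakly increasing. -/
def IsCyl (n : ℕ) {l : ℕ} (x : Fin l → ℤ) : Prop := Monotone x ∧ ∀ i j, x i ≤ x j + n

/-- The residue counting function of `x : Fin l → ℤ`. -/
noncomputable def resCount (n : ℕ) {l : ℕ} (x : Fin l → ℤ) : ZMod n → ℕ :=
  fun i => Nat.card {j : Fin l // ((x j : ℤ) : ZMod n) = i}

/-- The profile of column `k + 1` of `λ`: `x_j(k) = v_j + k - λ^{(j)′}_{k+1}`. -/
noncomputable def prof {l : ℕ} (v : Fin l → ℕ) (lam : Fin l → ℕ → ℕ) (k : ℕ) : Fin l → ℤ :=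
  fun j => (v j : ℤ) + k - colHt (lam j) (k + 1)

/-- The profile of column `k + 1` of the empty multipartition. -/
def prof0 {l : ℕ} (v : Fin l → ℕ) (k : ℕ) : Fin l → ℤ := fun j => (v j : ℤ) + k

/-! ### Cyclic shifts -/

/-- No sequence is weakly decreasing cyclically, since one full turn raises it by `n`. -/
lemma exists_lt_cshift {n l : ℕ} (hn : 0 < n) (hl : 0 < l) (x : Fin l → ℤ) :
    ∃ j, x j < cshift n x j := by
  by_contra! h
  have key : ∀ j (hj : j < l), x ⟨j, hj⟩ ≤ x ⟨0, hl⟩ := by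
    intro j
    induction j with
    | zero => intro _; exact le_rfl
    | succ j ih =>
      intro hj
      have h1 := h ⟨j, by omega⟩
      simp only [cshift, hj, dif_pos] at h1
      exact h1.trans (ih _)
  have h1 := h ⟨l - 1, by omega⟩
  have h2 : ¬ (l - 1 + 1 < l) := by omega
  simp only [cshift, h2, dif_neg, not_false_eq_true] at h1
  have := key (l - 1) (by omega)
  omega

lemma le_cshift {n l : ℕ} {x : Fin l → ℤ} (hx : IsCyl n x) (j : Fin l) : x j ≤ cshift n x j := by
  unfold cshift
  split_ifs with h
  · exact hx.1 (by rw [Fin.le_def]; simp)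
  · exact hx.2 _ _

lemma cshift_le {n l : ℕ} {x : Fin l → ℤ} (hx : IsCyl n x) (i j : Fin l) :
    cshift n x i ≤ x j + n := by
  unfold cshift
  split_ifs with h
  · exact hx.2 _ _
  · have : x ⟨0, i.pos⟩ ≤ x j := hx.1 (by rw [Fin.le_def]; simp)
    omega

lemma cshift_le_of_lt {n l : ℕ} {x : Fin l → ℤ} (hx : IsCyl n x) {i j : Fin l} (hij : i < j) :
    cshift n x i ≤ x j := by
  rw [Fin.lt_def] at hij
  have h : (i : ℕ) + 1 < l := by have := j.2; omega
  simp only [cshift, h, dif_pos]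
  exact hx.1 (by rw [Fin.le_def]; exact hij)

lemma isCyl_cshift {n l : ℕ} {x : Fin l → ℤ} (hx : IsCyl n x) : IsCyl n (cshift n x) := by
  constructor
  · intro i j hij
    rcases hij.lt_or_eq with h | h
    · exact (cshift_le_of_lt hx h).trans (le_cshift hx j)
    · rw [h]
  · intro i j
    have := cshift_le hx i j
    have := le_cshift hx j
    omega

/-- A cyclic shift permutes the residues of a profile. -/
lemma resCount_cshift (n : ℕ) {l : ℕ} (x : Fin l → ℤ) :
    resCount n (cshift n x) = resCount n x := by
  funext i
  cases l with
  | zero => unfold resCount; congr; funext j; exact j.elim0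
  | succ l =>
    refine Nat.card_congr ((finRotate (l + 1)).subtypeEquiv ?_)
    intro j
    by_cases h : (j : ℕ) + 1 < l + 1
    · have h2 : finRotate (l + 1) j = ⟨j + 1, h⟩ := by
        have : (j : ℕ) < l := by omega
        exact finRotate_of_lt this
      simp [cshift, h, h2]
    · have hj : j = Fin.last l := by
        apply Fin.ext
        have := j.2
        simp only [Fin.val_last]; omega
      subst hj
      simp [cshift]

/-! ### The energy function -/

lemma resCount_eq_sum (n : ℕ) {l : ℕ} (x : Fin l → ℤ) (i : ZMod n) :
    (resCount n x i : ℤ) = ∑ j, if ((x j : ℤ) : ZMod n) = i then 1 else 0 := by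
  unfold resCount
  rw [Nat.card_eq_fintype_card, Fintype.card_subtype, Finset.card_filter]
  push_cast
  rfl

lemma cast_toNat_emod (n : ℕ) [NeZero n] (z : ℤ) : (((z % n).toNat : ℕ) : ZMod n) = (z : ZMod n) := by
  have h : ((z % n).toNat : ℤ) = z % n :=
    Int.toNat_of_nonneg (Int.emod_nonneg _ (by exact_mod_cast NeZero.ne n))
  rw [← Int.cast_natCast, h, ZMod.intCast_mod]

lemma cntF_toNat (n : ℕ) [NeZero n] {l : ℕ} (x : Fin l → ℤ) :
    cntF n (fun j => (x j % n).toNat) = resCount n x := by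
  funext i
  unfold cntF resCount
  rw [Nat.card_eq_fintype_card, Fintype.card_subtype]
  simp only [cast_toNat_emod]

/-- Sums over the entries of `μ` of a function of the residue depend only on `cntF n μ`. -/
lemma cntF_sum_mul (n : ℕ) [NeZero n] {l : ℕ} (μ : Fin l → ℕ) (g : ZMod n → ℤ) :
    ∑ i, (cntF n μ i : ℤ) * g i = ∑ j, g (μ j) := by
  simp only [cntF, Finset.card_filter]
  push_cast
  simp only [Finset.sum_mul]
  rw [Finset.sum_comm]
  simp

/-- A step weight determines its counting function once the total sum is fixed: two counting
functions with the same step weight differ by a constant. -/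
lemma stepWt_inj (n : ℕ) [NeZero n] {e f : ZMod n → ℕ} (hs : ∑ i, (e i : ℤ) = ∑ i, (f i : ℤ))
    (h : stepWt n e = stepWt n f) : e = f := by
  have h1 : ∀ j, (e (j - 1) : ℤ) - f (j - 1) = e j - f j := by
    intro j
    have := congrFun h j
    simp only [stepWt] at this
    omega
  have h2 : ∀ m : ℕ, (e (m : ZMod n) : ℤ) - f (m : ZMod n) = e 0 - f 0 := by
    intro m
    induction m with
    | zero => simp
    | succ m ih =>
      have := h1 ((m + 1 : ℕ) : ZMod n)
      rw [show (((m + 1 : ℕ) : ZMod n) - 1) = (m : ZMod n) by push_cast; ring] at this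
      rw [← this, ih]
  have h3 : ∀ j : ZMod n, (e j : ℤ) - f j = e 0 - f 0 := by
    intro j
    have := h2 j.val
    rwa [ZMod.natCast_zmod_val] at this
  have h4 : ∑ j : ZMod n, ((e j : ℤ) - f j) = 0 := by
    rw [Finset.sum_sub_distrib, hs, sub_self]
  rw [Finset.sum_congr rfl (fun j _ => h3 j)] at h4
  simp only [Finset.sum_const, Finset.card_univ, ZMod.card, nsmul_eq_mul, mul_eq_zero] at h4
  have h5 : (e 0 : ℤ) - f 0 = 0 := h4.resolve_left (by exact_mod_cast NeZero.ne n)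
  funext j
  have := h3 j
  omega

lemma sum_cntF (n : ℕ) [NeZero n] {l : ℕ} (μ : Fin l → ℕ) : ∑ i, (cntF n μ i : ℤ) = l := by
  have := cntF_sum_mul n μ (fun _ => 1)
  simpa using this

/-- Across a window of length `n` the quotient by `n` jumps at most once. -/
lemma ediv_window {n : ℕ} (hn : 0 < n) {C z : ℤ} (h1 : C ≤ z) (h2 : z ≤ C + n) :
    (z / n = C / n ∧ z - C = z % n - C % n) ∨
      (z / n = C / n + 1 ∧ z - C = z % n - C % n + n) := by
  have hn' : (0 : ℤ) < n := by exact_mod_cast hn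
  have a1 := Int.emod_add_mul_ediv C n
  have a2 := Int.emod_add_mul_ediv z n
  have b1 := Int.emod_nonneg C hn'.ne'
  have b2 := Int.emod_lt_of_pos C hn'
  have b3 := Int.emod_nonneg z hn'.ne'
  have b4 := Int.emod_lt_of_pos z hn'
  set q := C / n
  set t := z / n
  have c1 : q ≤ t := by
    by_contra! h
    nlinarith
  have c2 : t ≤ q + 1 := by
    by_contra! h
    nlinarith
  have c3 : t = q ∨ t = q + 1 := by omega
  rcases c3 with h | h <;> rw [h] at a2
  · exact Or.inl ⟨h, by linarith⟩
  · exact Or.inr ⟨h, by linarith⟩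

/-- For `z` in the window `[C, C + n)` the quotient `z / n` records whether the residue of `z`
is at least that of `C`. -/
lemma ite_emod_ge {n : ℕ} (hn : 0 < n) {C z : ℤ} (h1 : C ≤ z) (h2 : z < C + n) :
    (if C % n ≤ z % n then (1 : ℤ) else 0) = C / n + 1 - z / n := by
  rcases ediv_window hn h1 h2.le with ⟨h3, h4⟩ | ⟨h3, h4⟩ <;> rw [h3] <;> split_ifs <;> omega

/-- The analogue of `ite_emod_ge` for the window `(C, C + n]`. -/
lemma ite_emod_gt {n : ℕ} (hn : 0 < n) {C z : ℤ} (h1 : C < z) (h2 : z ≤ C + n) :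
    (if C % n < z % n then (1 : ℤ) else 0) = C / n + 1 - z / n := by
  rcases ediv_window hn h1.le h2 with ⟨h3, h4⟩ | ⟨h3, h4⟩ <;> rw [h3] <;> split_ifs <;> omega

lemma theta_emod {n : ℕ} (hn : 0 < n) {x y : ℤ} (h1 : x < y) (h2 : y ≤ x + n) :
    (theta (x % n - y % n) : ℤ) = y / n - x / n := by
  have := ite_emod_gt hn h1 h2
  unfold theta
  split_ifs at this ⊢ <;> push_cast <;> omega

/-- Upper bound for `H`: the identity matching of the profiles `x` and `y` is a competitor. -/
lemma Hfun_le (n : ℕ) [NeZero n] {l : ℕ} (x y : Fin l → ℤ) (hxy : ∀ j, x j < y j)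
    (hyx : ∀ j, y j ≤ x j + n) :
    (Hfun n l (stepWt n (resCount n x)) (stepWt n (resCount n y)) : ℤ)
      ≤ ∑ j, (y j / n - x j / n) := by
  have hn : 0 < n := Nat.pos_of_ne_zero (NeZero.ne n)
  have hn' : (0 : ℤ) < n := by exact_mod_cast hn
  have lt : ∀ z : ℤ, (z % n).toNat < n := by
    intro z
    have := Int.emod_lt_of_pos z hn'
    omega
  have hval : ∀ z : ℤ, ((z % n).toNat : ℤ) = z % n := fun z =>
    Int.toNat_of_nonneg (Int.emod_nonneg _ hn'.ne')
  have h1 : Hfun n l (stepWt n (resCount n x)) (stepWt n (resCount n y)) ≤ _ :=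
    Nat.sInf_le ⟨fun j => (x j % n).toNat, fun j => (y j % n).toNat, fun j => lt _,
      fun j => lt _, by rw [cntF_toNat], by rw [cntF_toNat], rfl⟩
  have h2 := h1.trans (Finset.inf'_le _ (Finset.mem_univ (1 : Equiv.Perm (Fin l))))
  have h3 : ((∑ j, theta (((x j % n).toNat : ℤ) - ((y ((1 : Equiv.Perm (Fin l)) j) % n).toNat : ℤ)) : ℕ) : ℤ)
      = ∑ j, (y j / n - x j / n) := by
    push_cast
    refine Finset.sum_congr rfl fun j _ => ?_
    simp only [id, hval]
    exact theta_emod hn (hxy j) (hyx j)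
  rw [← h3]
  exact_mod_cast h2

/-- Lower bound for `H`: for every threshold `c`, any matching has at least
`#{μ ≥ c} - #{ν > c}` pairs with `μ_j ≥ ν_{σ(j)}`. -/
lemma le_Hfun (n : ℕ) [NeZero n] {l : ℕ} (x y : Fin l → ℤ) (c : ℤ) :
    ∑ j, ((if c ≤ x j % n then (1 : ℤ) else 0) - (if c < y j % n then 1 else 0)) ≤
    (Hfun n l (stepWt n (resCount n x)) (stepWt n (resCount n y)) : ℤ) := by
  have hn : 0 < n := Nat.pos_of_ne_zero (NeZero.ne n)
  have hn' : (0 : ℤ) < n := by exact_mod_cast hn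
  have lt : ∀ z : ℤ, (z % n).toNat < n := by
    intro z
    have := Int.emod_lt_of_pos z hn'
    omega
  have hval : ∀ z : ℤ, ((z % n).toNat : ℤ) = z % n := fun z =>
    Int.toNat_of_nonneg (Int.emod_nonneg _ hn'.ne')
  -- Threshold counts depend on a residue sequence only through its step weight.
  have cnt : ∀ (z : Fin l → ℤ) (μ : Fin l → ℕ) (_ : ∀ j, μ j < n)
      (_ : stepWt n (resCount n z) = stepWt n (cntF n μ)) (g : ℤ → ℤ),
      ∑ j, g (z j % n) = ∑ j, g (μ j) := by
    intro z μ hμ hz g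
    rw [← cntF_toNat] at hz
    have he := stepWt_inj n (by rw [sum_cntF, sum_cntF]) hz
    have e1 := cntF_sum_mul n (fun j => (z j % n).toNat) (fun i => g i.val)
    have e2 := cntF_sum_mul n μ (fun i => g i.val)
    rw [he, e2] at e1
    simp only [ZMod.val_cast_of_lt (lt _), ZMod.val_cast_of_lt (hμ _), hval] at e1
    exact e1.symm
  have hmem := Nat.sInf_mem (s := {m | ∃ μ ν : Fin l → ℕ, (∀ j, μ j < n) ∧ (∀ j, ν j < n) ∧
    stepWt n (resCount n x) = stepWt n (cntF n μ) ∧ stepWt n (resCount n y) = stepWt n (cntF n ν) ∧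
    m = Finset.univ.inf' ⟨1, Finset.mem_univ 1⟩
      fun σ : Equiv.Perm (Fin l) => ∑ j, theta ((μ j : ℤ) - (ν (σ j) : ℤ))})
    ⟨_, fun j => (x j % n).toNat, fun j => (y j % n).toNat, fun j => lt _,
      fun j => lt _, by rw [cntF_toNat], by rw [cntF_toNat], rfl⟩
  obtain ⟨μ, ν, hμ, hν, h1, h2, h3⟩ := hmem
  unfold Hfun
  rw [h3]
  obtain ⟨σ, -, hσ⟩ := Finset.exists_mem_eq_inf' (s := (Finset.univ : Finset (Equiv.Perm (Fin l))))
    ⟨1, Finset.mem_univ 1⟩ (fun σ => ∑ j, theta ((μ j : ℤ) - (ν (σ j) : ℤ)))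
  rw [hσ, Finset.sum_sub_distrib, cnt x μ hμ h1 (fun t => if c ≤ t then 1 else 0),
    cnt y ν hν h2 (fun t => if c < t then 1 else 0),
    ← Equiv.sum_comp σ (fun j => if c < (ν j : ℤ) then (1 : ℤ) else 0), ← Finset.sum_sub_distrib]
  push_cast
  refine Finset.sum_le_sum fun j _ => ?_
  unfold theta
  split_ifs <;> push_cast <;> omega

/-- The value of `H` on consecutive profiles `x < y` such that `y` is not strictly above the
cyclic shift of `x`. The index `j₀` with `y_{j₀} ≤ x_{j₀+1}` supplies the optimal threshold
`y_{j₀}`, and also shows `y ≤ x + n`, so that the identity matching is optimal. -/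
lemma Hfun_eq (n : ℕ) [NeZero n] {l : ℕ} (x y : Fin l → ℤ) (hx : IsCyl n x) (hy : IsCyl n y)
    (hxy : ∀ j, x j < y j) (h0 : 0 < l → ∃ j, y j ≤ cshift n x j) :
    (Hfun n l (stepWt n (resCount n x)) (stepWt n (resCount n y)) : ℤ)
      = ∑ j, (y j / n - x j / n) := by
  have hn : 0 < n := Nat.pos_of_ne_zero (NeZero.ne n)
  rcases Nat.eq_zero_or_pos l with hl | hl
  · subst hl
    have := Hfun_le n x y hxy (fun j => j.elim0)
    simp only [Finset.univ_eq_empty, Finset.sum_empty] at this ⊢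
    omega
  obtain ⟨j0, hj0⟩ := h0 hl
  have hle : ∀ j ≤ j0, y j0 ≤ x j + n := fun j _ => hj0.trans (cshift_le hx _ _)
  have hgt : ∀ j, j0 < j → y j0 ≤ x j := fun j hj => hj0.trans (cshift_le_of_lt hx hj)
  apply le_antisymm
  · refine Hfun_le n x y hxy fun j => ?_
    rcases le_or_gt j j0 with h | h
    · exact (hy.1 h).trans (hle j h)
    · have := hgt j h
      have := hy.2 j j0
      omega
  · refine le_trans (le_of_eq ?_) (le_Hfun n x y (y j0 % n))
    refine Finset.sum_congr rfl fun j _ => ?_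
    have hxyj := hxy j
    rcases le_or_gt j j0 with h | h
    · have h1 := hle j h
      have h2 := hy.1 h
      -- For `j ≤ j₀` both entries lie in the window below `y j0`, for `j > j₀` in the one above.
      have e1 := ite_emod_ge hn (C := y j0 - n) (z := x j) (by omega) (by omega)
      have e2 := ite_emod_gt hn (C := y j0 - n) (z := y j) (by omega) (by omega)
      rw [Int.sub_emod_right] at e1 e2
      rw [e1, e2]; ring
    · have h1 := hgt j h
      have h2 := hx.2 j j0
      have h3 := hxy j0
      have h4 := hy.2 j j0
      rw [ite_emod_ge hn (C := y j0) (z := x j) (by omega) (by omega),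
        ite_emod_gt hn (C := y j0) (z := y j) (by omega) (by omega)]
      ring

/-! ### Columns of partitions -/

lemma partition_antitone {f : ℕ → ℕ} (hf : IsPartitionF f) : Antitone f :=
  antitone_nat_of_succ_le hf.1

lemma colHt_eq_of_iff {f : ℕ → ℕ} {m h : ℕ} (H : ∀ i, m ≤ f i ↔ i < h) : colHt f m = h := by
  unfold colHt
  rw [Nat.card_congr ((Equiv.subtypeEquivRight H).trans Fin.equivSubtype.symm), Nat.card_fin]

lemma le_iff_lt_colHt {f : ℕ → ℕ} (hf : IsPartitionF f) {m : ℕ} (hm : 1 ≤ m) (i : ℕ) :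
    m ≤ f i ↔ i < colHt f m := by
  obtain ⟨N, hN⟩ := hf.2
  classical
  have hex : ∃ i, ¬ m ≤ f i := ⟨N, by rw [hN N le_rfl]; omega⟩
  have key : ∀ i, m ≤ f i ↔ i < Nat.find hex := by
    intro i
    constructor
    · intro h
      by_contra h2
      exact Nat.find_spec hex (h.trans (partition_antitone hf (not_lt.1 h2)))
    · intro h
      exact not_not.mp (Nat.find_min hex h)
  rw [colHt_eq_of_iff key]
  exact key i

lemma colHt_succ_le {f : ℕ → ℕ} (hf : IsPartitionF f) (k : ℕ) :
    colHt f (k + 2) ≤ colHt f (k + 1) := by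
  by_contra! h
  have h1 := (le_iff_lt_colHt hf (m := k + 2) (by omega) _).2 h
  have h2 := (le_iff_lt_colHt hf (m := k + 1) (by omega) (colHt f (k + 1))).1 (by omega)
  omega

lemma prof_lt {l : ℕ} {v : Fin l → ℕ} {lam : Fin l → ℕ → ℕ} (hmp : IsMP l lam) (k : ℕ)
    (j : Fin l) : prof v lam k j < prof v lam (k + 1) j := by
  have := colHt_succ_le (hmp j) k
  change (v j : ℤ) + k - colHt (lam j) (k + 1) < (v j : ℤ) + (k + 1 : ℕ) - colHt (lam j) (k + 2)
  push_cast
  omega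

/-- Passing from rows to columns in an inclusion of shifted diagrams. -/
lemma row_le_iff {f g : ℕ → ℕ} (hf : IsPartitionF f) (hg : IsPartitionF g) (s : ℕ) :
    (∀ i, f (i + s) ≤ g i) ↔ ∀ m, 1 ≤ m → colHt f m ≤ colHt g m + s := by
  constructor
  · intro h m hm
    by_contra! h2
    have h3 := (le_iff_lt_colHt hf hm _).2 h2
    have h4 := (le_iff_lt_colHt hg hm _).1 (h3.trans (h _))
    omega
  · intro h i
    rcases Nat.eq_zero_or_pos (f (i + s)) with h0 | h0
    · omega
    have h1 := (le_iff_lt_colHt hf h0 (i + s)).1 le_rfl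
    have h2 := h _ h0
    exact (le_iff_lt_colHt hg h0 i).2 (by omega)

/-- The cylindrical condition on rows, read off from the columns. -/
lemma cylindrical_iff {n l : ℕ} {v : Fin l → ℕ} (hv : SortedV n l v) {lam : Fin l → ℕ → ℕ}
    (hmp : IsMP l lam) : Cylindrical n v lam ↔ ∀ k, IsCyl n (prof v lam k) := by
  constructor
  · rintro ⟨h1, h2⟩ k
    have a1 : ∀ (j : ℕ) (hj : j + 1 < l), prof v lam k ⟨j, by omega⟩ ≤ prof v lam k ⟨j + 1, hj⟩ := by
      intro j hj
      have a := (row_le_iff (hmp _) (hmp _) _).1 (h1 j hj) (k + 1) (by omega)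
      have b : v ⟨j, Nat.lt_of_succ_lt hj⟩ ≤ v ⟨j + 1, hj⟩ := hv.1 (by rw [Fin.le_def]; simp)
      unfold prof
      omega
    have a2 : Monotone (prof v lam k) := by
      cases l with
      | zero => intro i; exact i.elim0
      | succ l =>
        rw [Fin.monotone_iff_le_succ]
        intro i
        exact a1 i (by omega)
    refine ⟨a2, fun i j => ?_⟩
    have hl := i.pos
    have a := (row_le_iff (hmp _) (hmp _) _).1 (h2 hl) (k + 1) (by omega)
    have b := hv.2 ⟨l - 1, by omega⟩
    have c1 : prof v lam k i ≤ prof v lam k ⟨l - 1, by omega⟩ :=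
      a2 (by rw [Fin.le_def]; simp only; omega)
    have c2 : prof v lam k ⟨0, hl⟩ ≤ prof v lam k j := a2 (by rw [Fin.le_def]; simp)
    unfold prof at c1 c2 ⊢
    omega
  · intro h
    constructor
    · intro j hj
      rw [row_le_iff (hmp _) (hmp _)]
      intro m hm
      obtain ⟨k, rfl⟩ : ∃ k, m = k + 1 := ⟨m - 1, by omega⟩
      have b : v ⟨j, Nat.lt_of_succ_lt hj⟩ ≤ v ⟨j + 1, hj⟩ := hv.1 (by rw [Fin.le_def]; simp)
      have a : prof v lam k ⟨j, by omega⟩ ≤ prof v lam k ⟨j + 1, hj⟩ :=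
        (h k).1 (by rw [Fin.le_def]; simp)
      unfold prof at a
      omega
    · intro hl
      rw [row_le_iff (hmp _) (hmp _)]
      intro m hm
      obtain ⟨k, rfl⟩ : ∃ k, m = k + 1 := ⟨m - 1, by omega⟩
      have b := hv.2 ⟨l - 1, by omega⟩
      have a := (h k).2 ⟨l - 1, by omega⟩ ⟨0, hl⟩
      unfold prof at a
      omega

lemma eFun_eq (n : ℕ) {l : ℕ} (v : Fin l → ℕ) (lam : Fin l → ℕ → ℕ) (k : ℕ) :
    eFun n v lam k = resCount n (prof v lam k) := by
  funext i
  unfold eFun resCount prof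
  push_cast
  rfl

/-! ### Maximality of the highest-lift -/

/-- In a highest-lift no column can be raised by a cyclic shift: otherwise shortening that single
column would give a cylindrical multipartition with the same path which is not lower. -/
lemma exists_le_cshift {n : ℕ} [NeZero n] {l : ℕ} {v : Fin l → ℕ} (hv : SortedV n l v)
    {lam : Fin l → ℕ → ℕ} {p : ℕ → ZMod n → ℤ} (hHL : IsHL n v lam p) (hl : 0 < l) (k : ℕ) :
    ∃ j, prof v lam (k + 1) j ≤ cshift n (prof v lam k) j := by
  by_contra! hcon
  obtain ⟨hmp, hcyl, hpi, hmax⟩ := hHL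
  have hcy := (cylindrical_iff hv hmp).1 hcyl
  -- `w j` is the height of column `k + 1` of component `j` after the shift.
  obtain ⟨w, hw⟩ : ∃ w : Fin l → ℕ, ∀ j, (w j : ℤ) = v j + k - cshift n (prof v lam k) j := by
    refine ⟨fun j => (v j + k - cshift n (prof v lam k) j).toNat, fun j => ?_⟩
    apply Int.toNat_of_nonneg
    have := hcon j
    unfold prof at this ⊢
    push_cast at this
    omega
  have hw1 : ∀ j, w j ≤ colHt (lam j) (k + 1) := by
    intro j
    have h1 := hw j
    have h2 := le_cshift (hcy k) j
    have h3 : prof v lam k j = v j + k - colHt (lam j) (k + 1) := rfl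
    omega
  have hw2 : ∀ j, colHt (lam j) (k + 2) ≤ w j := by
    intro j
    have h1 := hw j
    have h2 := hcon j
    have h3 : prof v lam (k + 1) j = v j + (k + 1 : ℕ) - colHt (lam j) (k + 2) := rfl
    push_cast at h3
    omega
  -- The nodes removed from column `k + 1` end their rows, because column `k + 2` has height at
  -- most `w j`.
  let mu : Fin l → ℕ → ℕ := fun j i => if lam j i = k + 1 ∧ w j ≤ i then k else lam j i
  have hmu1 : ∀ j i, k + 1 ≤ mu j i ↔ i < w j := by
    intro j i
    have a := le_iff_lt_colHt (hmp j) (m := k + 1) (by omega) i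
    have b := le_iff_lt_colHt (hmp j) (m := k + 2) (by omega) i
    have := hw1 j
    have := hw2 j
    simp only [mu]
    split_ifs <;> omega
  have hmu2 : ∀ j i m, m ≠ k + 1 → (m ≤ mu j i ↔ m ≤ lam j i) := by
    intro j i m hm
    simp only [mu]
    split_ifs <;> omega
  have hmump : IsMP l mu := by
    intro j
    constructor
    · intro i
      by_contra! h
      by_cases hm : mu j (i + 1) = k + 1
      · have a := (hmu1 j (i + 1)).1 hm.ge
        have b := (hmu1 j i).2 (by omega)
        omega
      · have a := (hmu2 j (i + 1) _ hm).1 le_rfl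
        have b := (hmu2 j i _ hm).2 (a.trans ((hmp j).1 i))
        omega
    · obtain ⟨N, hN⟩ := (hmp j).2
      refine ⟨N, fun i hi => ?_⟩
      simp only [mu, hN i hi]
      simp
  have hcol1 : ∀ j, colHt (mu j) (k + 1) = w j := fun j => colHt_eq_of_iff (hmu1 j)
  have hcol2 : ∀ j m, m ≠ k + 1 → colHt (mu j) m = colHt (lam j) m := by
    intro j m hm
    exact Nat.card_congr (Equiv.subtypeEquivRight fun i => hmu2 j i m hm)
  have hprof1 : prof v mu k = cshift n (prof v lam k) := by
    funext j
    have := hw j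
    change (v j : ℤ) + k - colHt (mu j) (k + 1) = _
    rw [hcol1]
    omega
  have hprof2 : ∀ k', k' ≠ k → prof v mu k' = prof v lam k' := by
    intro k' hk'
    funext j
    change (v j : ℤ) + k' - colHt (mu j) (k' + 1) = (v j : ℤ) + k' - colHt (lam j) (k' + 1)
    rw [hcol2 j _ (by omega)]
  have hmucyl : Cylindrical n v mu := by
    rw [cylindrical_iff hv hmump]
    intro k'
    by_cases hk' : k' = k
    · subst hk'
      rw [hprof1]
      exact isCyl_cshift (hcy _)
    · rw [hprof2 k' hk']
      exact hcy k'
  have hmupi : IsPi n v mu p := by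
    refine ⟨fun k' => ?_, hpi.2⟩
    rw [hpi.1 k', eFun_eq, eFun_eq]
    by_cases hk' : k' = k
    · subst hk'
      rw [hprof1, resCount_cshift]
    · rw [hprof2 k' hk']
  have hH := hmax mu hmump hmucyl hmupi
  obtain ⟨j, hj⟩ := exists_lt_cshift (n := n) (Nat.pos_of_ne_zero (NeZero.ne n)) hl (prof v lam k)
  have h1 := hH j (k + 1) (by omega)
  rw [hcol1] at h1
  have h2 := hw j
  have h3 : prof v lam k j = v j + k - colHt (lam j) (k + 1) := rfl
  omega

/-! ### Counting coloured nodes by columns -/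

/-- The colours in a column of height `h` with top colour `z` are `z, z - 1, …, z - h + 1`;
this counts those equal to `r`. -/
def colCount (n : ℕ) (z : ℤ) (h : ℕ) (r : ZMod n) : ℤ :=
  ∑ i ∈ Finset.range h, if ((z - i : ℤ) : ZMod n) = r then 1 else 0

/-- Multiples of `n` in the interval `(z - h, z]`. -/
lemma colCount_zero (n : ℕ) [NeZero n] (z : ℤ) (h : ℕ) :
    colCount n z h 0 = z / n - (z - h) / n := by
  have hn : 0 < n := Nat.pos_of_ne_zero (NeZero.ne n)
  have hn' : (0 : ℤ) < n := by exact_mod_cast hn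
  have key : ∀ t : ℤ, (if ((t : ℤ) : ZMod n) = 0 then (1 : ℤ) else 0) = t / n - (t - 1) / n := by
    intro t
    -- The top of the window `[t, t + n)` has the residue of `t - 1`, which is smaller than that
    -- of `t` unless `n ∣ t`.
    have e := ite_emod_ge hn (C := t) (z := t + n - 1) (by omega) (by omega)
    have e1 : (t + n - 1) / (n : ℤ) = (t - 1) / n + 1 := by
      rw [show t + n - 1 = (t - 1) + n by ring, Int.add_ediv_of_dvd_right dvd_rfl, Int.ediv_self hn'.ne']
    have e2 : (t + n - 1) % (n : ℤ) = (t - 1) % n := by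
      rw [show t + n - 1 = (t - 1) + n by ring, Int.add_emod_right]
    have d1 : ((t : ℤ) : ZMod n) = 0 ↔ (n : ℤ) ∣ t := ZMod.intCast_zmod_eq_zero_iff_dvd t n
    have a1 := Int.emod_add_mul_ediv t n
    have a2 := Int.emod_add_mul_ediv (t - 1) n
    have b1 := Int.emod_nonneg t hn'.ne'
    have b2 := Int.emod_lt_of_pos t hn'
    have b3 := Int.emod_nonneg (t - 1) hn'.ne'
    have b4 := Int.emod_lt_of_pos (t - 1) hn'
    rw [e1, e2] at e
    by_cases h : (n : ℤ) ∣ t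
    · rw [if_pos (d1.2 h)]
      have h0 := Int.emod_eq_zero_of_dvd h
      rw [if_pos (by omega)] at e
      omega
    · rw [if_neg (fun h' => h (d1.1 h'))]
      have h0 : t % n ≠ 0 := fun h' => h (Int.dvd_of_emod_eq_zero h')
      have h5 : (t - 1) / (n : ℤ) = t / n := by
        rw [Int.ediv_eq_iff_of_pos hn']
        constructor <;> nlinarith [Int.lt_iff_add_one_le.1 (lt_of_le_of_ne b1 h0.symm)]
      omega
  unfold colCount
  have : ∀ i ∈ Finset.range h, (if ((z - i : ℤ) : ZMod n) = 0 then (1 : ℤ) else 0)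
      = (fun i : ℕ => (z - i) / (n : ℤ)) i - (fun i : ℕ => (z - i) / (n : ℤ)) (i + 1) := by
    intro i _
    rw [key]
    simp only
    congr 2
    push_cast
    ring
  rw [Finset.sum_congr rfl this, Finset.sum_range_sub']
  simp

/-- The two counts telescope: only the top colour and the one just below the bottom survive. -/
lemma colCount_sub (n : ℕ) (z : ℤ) (h : ℕ) (r : ZMod n) :
    colCount n z h r - colCount n z h (r + 1) =
      (if ((z : ℤ) : ZMod n) = r then 1 else 0) - (if ((z - h : ℤ) : ZMod n) = r then 1 else 0) := by
  unfold colCount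
  rw [← Finset.sum_sub_distrib]
  have : ∀ i ∈ Finset.range h, (if ((z - i : ℤ) : ZMod n) = r then (1 : ℤ) else 0)
        - (if ((z - i : ℤ) : ZMod n) = r + 1 then 1 else 0)
      = (fun i : ℕ => if ((z - i : ℤ) : ZMod n) = r then (1 : ℤ) else 0) i -
        (fun i : ℕ => if ((z - i : ℤ) : ZMod n) = r then (1 : ℤ) else 0) (i + 1) := by
    intro i _
    simp only
    congr 2
    rw [← sub_eq_iff_eq_add]
    push_cast
    rw [sub_sub]
  rw [Finset.sum_congr rfl this, Finset.sum_range_sub']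
  simp

/-- Counting coloured nodes column by column; the colours of column `k + 1` of component `j`
start at `v_j + k`. -/
lemma Ncolour_eq (n : ℕ) {l : ℕ} (v : Fin l → ℕ) {lam : Fin l → ℕ → ℕ} (hmp : IsMP l lam)
    {M : ℕ} (hM : ∀ j i, lam j i ≤ M) (r : ZMod n) :
    (Ncolour n v lam r : ℤ) =
      ∑ k ∈ Finset.range M, ∑ j, colCount n (v j + k) (colHt (lam j) (k + 1)) r := by
  classical
  let S : Finset (Σ _ : ℕ, Σ _ : Fin l, ℕ) := (Finset.range M).sigma fun k =>
    (Finset.univ : Finset (Fin l)).sigma fun j =>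
      (Finset.range (colHt (lam j) (k + 1))).filter
        fun i => (((v j : ℤ) + k - i : ℤ) : ZMod n) = r
  have hcard : Ncolour n v lam r = S.card := by
    unfold Ncolour
    have hS : S.card = Nat.card {x // x ∈ S} := by
      rw [Nat.card_eq_fintype_card, Fintype.card_coe]
    rw [hS]
    have hcol : ∀ (j : Fin l) (k i : ℕ), colour n v j i (k + 1)
        = (((v j : ℤ) + k - i : ℤ) : ZMod n) := by
      intro j k i
      unfold colour
      push_cast
      ring
    have hmem : ∀ k j i, (⟨k, j, i⟩ : Σ _ : ℕ, Σ _ : Fin l, ℕ) ∈ S ↔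
        k + 1 ≤ lam j i ∧ colour n v j i (k + 1) = r := by
      intro k j i
      have h1 := hM j i
      simp only [S, Finset.mem_sigma, Finset.mem_range, Finset.mem_univ, true_and,
        Finset.mem_filter, hcol, ← le_iff_lt_colHt (hmp j) (Nat.le_add_left 1 k)]
      constructor
      · rintro ⟨-, h⟩
        exact h
      · intro h
        exact ⟨by omega, h⟩
    exact Nat.card_congr
      { toFun := fun x => ⟨⟨x.1.2.2 - 1, x.1.1, x.1.2.1⟩, by
          rw [hmem, Nat.sub_add_cancel x.2.1]
          exact x.2.2⟩
        invFun := fun y => ⟨(y.1.2.1, y.1.2.2, y.1.1 + 1), Nat.le_add_left 1 _,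
          (hmem _ _ _).1 y.2⟩
        left_inv := fun x => by
          apply Subtype.ext
          simp only [Nat.sub_add_cancel x.2.1]
        right_inv := fun y => rfl }
  rw [hcard]
  simp only [S, Finset.card_sigma, colCount, Finset.card_filter]
  push_cast
  rfl

/-! ### Weight and energy -/

lemma gsp_step (n : ℕ) {l : ℕ} (v : Fin l → ℕ) (k : ℕ) :
    (fun i => gsp n (wtOf n v) (k + 1) i - gsp n (wtOf n v) k i)
      = stepWt n (resCount n (prof0 v k)) := by
  funext i
  simp only [gsp, wtOf, stepWt, resCount_eq_sum, prof0, Finset.card_filter]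
  push_cast
  congr 1 <;> refine Finset.sum_congr rfl fun j _ => ?_
  · congr 1
    rw [eq_sub_iff_add_eq, eq_sub_iff_add_eq, add_assoc]
  · congr 1
    rw [eq_sub_iff_add_eq]

/-- Written as a difference of two first differences, to match `colCount_sub`. -/
lemma sum_alphaP (n : ℕ) [NeZero n] (N : ZMod n → ℤ) (i : ZMod n) :
    ∑ r, N r * alphaP n r i = (N i - N (i + 1)) - (N (i - 1) - N (i - 1 + 1)) := by
  have h1 : ∀ r : ZMod n, (i = r - 1) ↔ (r = i + 1) := fun r => by
    rw [eq_sub_iff_add_eq, eq_comm]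
  have h2 : ∀ r : ZMod n, (i = r + 1) ↔ (r = i - 1) := fun r => by
    rw [eq_sub_iff_add_eq, eq_comm]
  have h3 : ∀ r : ZMod n, (i = r) ↔ (r = i) := fun r => eq_comm
  simp only [alphaP, Lam, h1, h2, h3]
  have : ∀ r : ZMod n, N r * (-(if r = i + 1 then (1 : ℤ) else 0) + 2 * (if r = i then 1 else 0)
      - (if r = i - 1 then 1 else 0)) = 2 * (if r = i then N r else 0)
      - (if r = i + 1 then N r else 0) - (if r = i - 1 then N r else 0) := by
    intro r
    split_ifs <;> ring
  simp only [this, Finset.sum_sub_distrib, ← Finset.mul_sum, Finset.sum_ite_eq', Finset.mem_univ,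
    if_true, sub_add_cancel]
  ring

/-- Summation by parts; at `k = 1` the term `F (k - 1)` is `F 0`, so truncation is harmless. -/
lemma abel_sum (F : ℕ → ℤ) (M : ℕ) :
    ∑ k ∈ Finset.Icc 1 M, (k : ℤ) * (F (k - 1) - F k) = ∑ k ∈ Finset.range M, F k - M * F M := by
  induction M with
  | zero => simp
  | succ M ih =>
    rw [Finset.sum_Icc_succ_top (by omega), ih, Finset.sum_range_succ]
    simp only [Nat.add_sub_cancel]
    push_cast
    ring

lemma exists_bound {l : ℕ} {lam : Fin l → ℕ → ℕ} (hmp : IsMP l lam) :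
    ∃ M, ∀ j i, lam j i ≤ M := by
  refine ⟨∑ j, lam j 0, fun j i => ?_⟩
  exact (partition_antitone (hmp j) (Nat.zero_le i)).trans
    (Finset.single_le_sum (f := fun j => lam j 0) (fun _ _ => Nat.zero_le _) (Finset.mem_univ j))

/-- `wt(λ(p)) = wt(p)`, i.e. `p₀ = Λ - ∑_r N^r(λ) α′_r` and `E(p) = N⁰(λ)`. -/
theorem weight_of_highest_lift (n : ℕ) [NeZero n] (hn : 2 ≤ n) (l : ℕ)
    (v : Fin l → ℕ) (hv : SortedV n l v) (lam : Fin l → ℕ → ℕ) (p : ℕ → ZMod n → ℤ)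
    (hHL : IsHL n v lam p) (K : ℕ) (hK : ∀ k ≥ K, p k = gsp n (wtOf n v) k) :
    (∀ i, p 0 i = wtOf n v i - ∑ r : ZMod n, (Ncolour n v lam r : ℤ) * alphaP n r i) ∧
    (∑ k ∈ Finset.Icc 1 K, (k : ℤ) *
        ((Hfun n l (fun i => p k i - p (k - 1) i) (fun i => p (k + 1) i - p k i) : ℤ) -
          (Hfun n l (fun i => gsp n (wtOf n v) k i - gsp n (wtOf n v) (k - 1) i)
            (fun i => gsp n (wtOf n v) (k + 1) i - gsp n (wtOf n v) k i) : ℤ)))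
      = (Ncolour n v lam 0 : ℤ) := by
  have ⟨hmp, hcyl, hpi, _⟩ := hHL
  obtain ⟨M0, hM0⟩ := exists_bound hmp
  set M := max M0 K with hMdef
  have hM : ∀ j i, lam j i ≤ M := fun j i => (hM0 j i).trans (le_max_left _ _)
  have hKM : K ≤ M := le_max_right _ _
  have hcy := (cylindrical_iff hv hmp).1 hcyl
  have hstep : ∀ k, (fun i => p (k + 1) i - p k i) = stepWt n (resCount n (prof v lam k)) := by
    intro k
    rw [hpi.1 k, eFun_eq]
  constructor
  · intro i
    have t1 := Finset.sum_range_sub (fun k => p k i) M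
    have t2 := Finset.sum_range_sub (fun k => gsp n (wtOf n v) k i) M
    have t3 : p M i = gsp n (wtOf n v) M i := by rw [hK M hKM]
    have t4 : gsp n (wtOf n v) 0 i = wtOf n v i := by simp [gsp]
    have t5 : ∑ r : ZMod n, (Ncolour n v lam r : ℤ) * alphaP n r i
        = ∑ k ∈ Finset.range M, (p (k + 1) i - p k i)
          - ∑ k ∈ Finset.range M, (gsp n (wtOf n v) (k + 1) i - gsp n (wtOf n v) k i) := by
      rw [sum_alphaP n (fun r => (Ncolour n v lam r : ℤ))]
      simp only [Ncolour_eq n v hmp hM, ← Finset.sum_sub_distrib, colCount_sub]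
      refine Finset.sum_congr rfl fun k _ => ?_
      have e1 : p (k + 1) i - p k i = _ := congrFun (hstep k) i
      have e2 : gsp n (wtOf n v) (k + 1) i - gsp n (wtOf n v) k i = _ :=
        congrFun (gsp_step n v k) i
      rw [e1, e2]
      simp only [stepWt, resCount_eq_sum, ← Finset.sum_sub_distrib]
      refine Finset.sum_congr rfl fun j _ => ?_
      change ((if ((prof0 v k j : ℤ) : ZMod n) = i then (1 : ℤ) else 0)
          - (if ((prof v lam k j : ℤ) : ZMod n) = i then 1 else 0))
        - ((if ((prof0 v k j : ℤ) : ZMod n) = i - 1 then (1 : ℤ) else 0)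
          - (if ((prof v lam k j : ℤ) : ZMod n) = i - 1 then 1 else 0)) = _
      ring
    rw [t5]
    linarith
  · -- Beyond `K` the path agrees with the ground state, so the range may be extended to `M`,
    -- where all columns of `λ` are empty.
    have hzero : ∀ k ∈ Finset.Icc 1 M, k ∉ Finset.Icc 1 K → (k : ℤ) *
        ((Hfun n l (fun i => p k i - p (k - 1) i) (fun i => p (k + 1) i - p k i) : ℤ) -
          (Hfun n l (fun i => gsp n (wtOf n v) k i - gsp n (wtOf n v) (k - 1) i)
            (fun i => gsp n (wtOf n v) (k + 1) i - gsp n (wtOf n v) k i) : ℤ)) = 0 := by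
      intro k h1 h2
      rw [Finset.mem_Icc] at h1 h2
      rw [hK k (by omega), hK (k - 1) (by omega), hK (k + 1) (by omega)]
      simp
    rw [Finset.sum_subset (Finset.Icc_subset_Icc_right hKM) hzero]
    -- `F k` is the number of nodes of colour `0` in column `k + 1`.
    let F : ℕ → ℤ := fun k => ∑ j, (prof0 v k j / (n : ℤ) - prof v lam k j / n)
    have hterm : ∀ k ∈ Finset.Icc 1 M, (k : ℤ) *
        ((Hfun n l (fun i => p k i - p (k - 1) i) (fun i => p (k + 1) i - p k i) : ℤ) -
          (Hfun n l (fun i => gsp n (wtOf n v) k i - gsp n (wtOf n v) (k - 1) i)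
            (fun i => gsp n (wtOf n v) (k + 1) i - gsp n (wtOf n v) k i) : ℤ))
        = (k : ℤ) * (F (k - 1) - F k) := by
      intro k hk
      rw [Finset.mem_Icc] at hk
      obtain ⟨k, rfl⟩ : ∃ m, k = m + 1 := ⟨k - 1, by omega⟩
      simp only [Nat.add_sub_cancel]
      have hcy0 : ∀ k, IsCyl n (prof0 v k) := by
        intro k
        refine ⟨fun i j hij => ?_, fun i j => ?_⟩
        · have := hv.1 hij
          simp only [prof0]; omega
        · have := hv.2 i
          simp only [prof0]; omega
      rw [hstep k, hstep (k + 1), gsp_step n v k, gsp_step n v (k + 1),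
        Hfun_eq n _ _ (hcy _) (hcy _) (prof_lt hmp k) (fun hl => exists_le_cshift hv hHL hl k),
        Hfun_eq n _ _ (hcy0 _) (hcy0 _) (fun j => by simp [prof0]) (fun hl => ?_)]
      · simp only [F, ← Finset.sum_sub_distrib]
        congr 1
        refine Finset.sum_congr rfl fun j _ => ?_
        ring
      · obtain ⟨j, hj⟩ := exists_lt_cshift (n := n) (by omega) hl (prof0 v k)
        refine ⟨j, ?_⟩
        have : prof0 v (k + 1) j = prof0 v k j + 1 := by simp [prof0]; ring
        omega
    rw [Finset.sum_congr rfl hterm, abel_sum, Ncolour_eq n v hmp hM]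
    have hFM : F M = 0 := by
      refine Finset.sum_eq_zero fun j _ => ?_
      have : colHt (lam j) (M + 1) = 0 := colHt_eq_of_iff fun i => by
        have := hM j i
        omega
      simp [prof, prof0, this]
    rw [hFM, mul_zero, sub_zero]
    refine Finset.sum_congr rfl fun k _ => Finset.sum_congr rfl fun j _ => ?_
    rw [colCount_zero]
    rfl

end BF
end

section
/- Let Λ ∈ P_l^+, p ∈ 𝒫(Λ), λ = λ(p) and r ∈ ℤ/nℤ. Then the number of normal r-nodes of λ that are removable equals max_{k ≥ 0} |p_k − η̂_k|^−_r, where η_k = p_{k+1} − p_k. -/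
/-!
Write `μ_j(k) = v_j + k - h_j(k)`, where `h_j(k) = colHt (lam j) (k + 1)`, so that `η̂_k` is the sum
of the fundamental weights `Λ_{μ_j(k)}`. A removable `r`-node of component `j` in column `k + 1`
is an index `j` with `μ_j(k) ≡ r - 1` and `μ_j(k + 1) > μ_j(k) + 1`; an addable `r`-node in column
`k + 2` is an index with `μ_j(k + 1) ≡ r` and `μ_j(k + 1) > μ_j(k) + 1`. The indices with
`μ_j(k + 1) = μ_j(k) + 1` contribute equally to `η̂_k(r - 1)` and to `η̂_{k+1}(r)`, and so the path
equation makes `η̂_k(r) - p_k(r)` equal to the number of removable minus the number of addable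
`r`-nodes lying at the ends of rows of length greater than `k` (`bal_tailSig`).

On the other side, deleting pairs `RA` preserves the maximum over all suffixes of a word of
`#R - #A` (`sufMax_step`), and that maximum is `b` for the reduced word `A^a R^b`. It remains to see
that the maximum over all suffixes of the signature is attained on the nodes at the ends of rows
longer than some `k`. Cylindricity says that each component, with its rows shifted suitably, is
contained in the preceding ones on the cylinder. Comparing two nodes `x < y` of the signature, this
gives that the row of `x` is at most as long as that of `y` (`len_le_of_nodeLT`), so these sets of
nodes are suffixes, and that among nodes in rows of one length the removable ones come first
(`flag_of_nodeLT`), so an optimal suffix, which starts with a removable node, can be extended to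
all the rows of that length without loss (`exists_sufMax_le_bal_tailSig`).
-/

open scoped BigOperators

namespace BF

/-! ### Reduction of signature words -/

/-- The balance of a word: its number of removable letters (`R`, encoded as `true`)
minus its number of addable letters (`A`, encoded as `false`). -/
def bal (w : List Bool) : ℤ := (w.count true : ℤ) - (w.count false : ℤ)

/-- The maximal balance of a suffix of a word (the empty suffix included). -/
def sufMax : List Bool → ℤ
  | [] => 0
  | x :: xs => max (bal (x :: xs)) (sufMax xs)

lemma bal_append (s t : List Bool) : bal (s ++ t) = bal s + bal t := by
  simp only [bal, List.count_append]; push_cast; ring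

lemma bal_cons_true (w : List Bool) : bal (true :: w) = bal w + 1 := by
  simp [bal]; ring

lemma bal_cons_false (w : List Bool) : bal (false :: w) = bal w - 1 := by
  simp [bal]; ring

lemma bal_nonneg_of_forall (w : List Bool) (h : ∀ x ∈ w, x = true) : 0 ≤ bal w := by
  have : w.count false = 0 := List.count_eq_zero.2 fun hf => by simpa using h _ hf
  simp [bal, this]

lemma bal_le_sufMax (w : List Bool) : bal w ≤ sufMax w := by
  cases w with
  | nil => simp [bal, sufMax]
  | cons x xs => exact le_max_left _ _

lemma bal_le_sufMax_append (t s : List Bool) : bal s ≤ sufMax (t ++ s) := by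
  induction t with
  | nil => exact bal_le_sufMax s
  | cons x xs ih => exact ih.trans (le_max_right _ _)

/-- Deleting a pair `RA` does not change the maximal suffix balance: the pair has balance `0`,
and a suffix starting between its two letters never beats the suffix starting after it. -/
lemma sufMax_step {w w' : List Bool} (h : SigStep w w') : sufMax w = sufMax w' := by
  obtain ⟨l₁, l₂⟩ := h
  induction l₁ with
  | nil =>
    have := bal_le_sufMax l₂
    simp only [List.nil_append, sufMax, bal_cons_true, bal_cons_false]
    omega
  | cons x xs ih =>
    have h : bal (x :: (xs ++ true :: false :: l₂)) = bal (x :: (xs ++ l₂)) := by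
      rw [← List.cons_append, ← List.cons_append, bal_append, bal_append, bal_cons_true,
        bal_cons_false]
      ring
    simp only [List.cons_append, sufMax, ih, h]

lemma sufMax_reduced (a b : ℕ) :
    sufMax (List.replicate a false ++ List.replicate b true) = b := by
  have hb : ∀ b : ℕ, bal (List.replicate b true) = b := fun b => by
    simp [bal, List.count_replicate]
  induction a with
  | zero =>
    induction b with
    | zero => rfl
    | succ b ih =>
      simp only [List.replicate_zero, List.nil_append] at ih ⊢
      rw [List.replicate_succ, sufMax, ih, ← List.replicate_succ, hb]
      push_cast; omega
  | succ a ih =>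
    have := bal_le_sufMax (List.replicate a false ++ List.replicate b true)
    simp only [List.replicate_succ, List.cons_append, sufMax, bal_cons_false]
    omega

lemma sufMax_of_reduces {w w' : List Bool} (h : Relation.ReflTransGen SigStep w w') :
    sufMax w = sufMax w' := by
  induction h with
  | refl => rfl
  | tail _ h ih => exact ih.trans (sufMax_step h)

/-- The maximal suffix balance is attained by a suffix that is empty or starts with `R`. -/
lemma exists_suffix_eq_sufMax (w : List Bool) :
    ∃ t s, w = t ++ s ∧ bal s = sufMax w ∧ (s = [] ∨ ∃ s', s = true :: s') := by
  induction w with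
  | nil => exact ⟨[], [], rfl, rfl, Or.inl rfl⟩
  | cons x xs ih =>
    obtain ⟨t, s, h, hs, hx⟩ := ih
    rcases le_or_gt (bal (x :: xs)) (sufMax xs) with hle | hlt
    · exact ⟨x :: t, s, by simp [h], by rw [hs, sufMax, max_eq_right hle], hx⟩
    · refine ⟨[], x :: xs, rfl, by rw [sufMax, max_eq_left hlt.le], Or.inr ⟨xs, ?_⟩⟩
      have := bal_le_sufMax xs
      cases x
      · rw [bal_cons_false] at hlt; omega
      · rfl

lemma colHt_eq_zero {f : ℕ → ℕ} (hf : IsPartitionF f) {k : ℕ} (hk : f 0 ≤ k) :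
    colHt f (k + 1) = 0 := by
  by_contra! h
  have := (le_iff_lt_colHt hf (m := k + 1) (by omega) 0).2 (by omega)
  omega

/-! ### Consequences of cylindricity -/

section
variable {n l : ℕ} {v : Fin l → ℕ} {lam : Fin l → ℕ → ℕ}

lemma cyl_le (hv : Monotone v) (hc : Cylindrical n v lam) (a : ℕ) (ha : a < l) :
    ∀ (b : ℕ) (hb : b < l), a ≤ b → ∀ i,
      lam ⟨b, hb⟩ (i + (v ⟨b, hb⟩ - v ⟨a, ha⟩)) ≤ lam ⟨a, ha⟩ i := by
  intro b hb hab
  induction b, hab using Nat.le_induction with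
  | base => intro i; simp
  | succ b hab ih =>
    intro i
    have hb' : b < l := by omega
    have h1 : v ⟨a, ha⟩ ≤ v ⟨b, hb'⟩ := hv (by simpa using hab)
    have h2 : v ⟨b, hb'⟩ ≤ v ⟨b + 1, hb⟩ := hv (by simp)
    refine le_trans ?_ (ih hb' i)
    refine le_trans (le_of_eq ?_) (hc.1 b hb _)
    congr 1
    omega

/-- Going once around the cylinder: component `j`, shifted by `n + v j - v j'` rows, is contained
in component `j'`, whatever the order of `j` and `j'`. -/
lemma cyl_wrap (hv : SortedV n l v) (hc : Cylindrical n v lam) (j j' : Fin l) (i : ℕ) :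
    lam j (i + (n + v j - v j')) ≤ lam j' i := by
  have hl : 0 < l := j.pos
  have hl' : l - 1 < l := by omega
  have h0 : v ⟨0, hl⟩ ≤ v j := hv.1 (by simp [Fin.le_def])
  have h1 : v j' ≤ v ⟨l - 1, hl'⟩ := hv.1 (by rw [Fin.le_def]; simp; omega)
  have h2 := hv.2 ⟨l - 1, hl'⟩
  have e1 := cyl_le hv.1 hc j' j'.2 (l - 1) hl' (by omega) i
  have e2 := hc.2 hl (i + (v ⟨l - 1, hl'⟩ - v j'))
  have e3 := cyl_le hv.1 hc 0 hl j j.2 (by omega)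
    (i + (v ⟨l - 1, hl'⟩ - v j') + (n + v ⟨0, hl⟩ - v ⟨l - 1, hl'⟩))
  refine le_trans (le_of_eq ?_) (e3.trans (e2.trans e1))
  simp only [Fin.eta]
  congr 1
  omega

/-- `x = (j, i, isRemovable)` is a removable or an addable `r`-node of `λ`. -/
def IsNode (n : ℕ) {l : ℕ} (v : Fin l → ℕ) (lam : Fin l → ℕ → ℕ) (r : ZMod n)
    (x : Fin l × ℕ × Bool) : Prop :=
  (x.2.2 = true ∧ RemNode n v lam r x.1 x.2.1) ∨ (x.2.2 = false ∧ AddNode n v lam r x.1 x.2.1)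

lemma IsNode.nodeD_cast {r : ZMod n} {x : Fin l × ℕ × Bool} (hx : IsNode n v lam r x) :
    ((nodeD v lam x : ℤ) : ZMod n) = r := by
  rcases hx with ⟨h, h'⟩ | ⟨h, h'⟩
  · rw [← h'.2.2]; simp [nodeD, h, colour]; ring
  · rw [← h'.2]; simp [nodeD, h, colour]; ring

/-- For nodes `x < y` of the signature there is a shift `m` of the row index for which component
`x.1` is contained in component `y.1`, and the diagonals of `x` and `y` are far enough apart to
compare this shift with their row indices. -/
lemma exists_shift (hv : SortedV n l v) (hc : Cylindrical n v lam) {r : ZMod n}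
    {x y : Fin l × ℕ × Bool} (hx : IsNode n v lam r x) (hy : IsNode n v lam r y)
    (hlt : nodeLT v lam x y) :
    ∃ m : ℕ, (∀ i, lam x.1 (i + m) ≤ lam y.1 i) ∧
      (m : ℤ) + nodeD v lam x ≤ nodeD v lam y + v x.1 - v y.1 := by
  have hvy := hv.2 y.1
  rcases hlt with hlt | ⟨heq, hj⟩
  · refine ⟨n + v x.1 - v y.1, cyl_wrap hv hc x.1 y.1, ?_⟩
    -- Distinct diagonals of the same colour differ by at least `n`.
    have hdvd : (n : ℤ) ∣ nodeD v lam y - nodeD v lam x := 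
      (ZMod.intCast_eq_intCast_iff_dvd_sub _ _ _).1 (hx.nodeD_cast.trans hy.nodeD_cast.symm)
    have := Int.le_of_dvd (by omega) hdvd
    omega
  · have h1 : v y.1 ≤ v x.1 := hv.1 (by rw [Fin.le_def]; omega)
    refine ⟨v x.1 - v y.1, cyl_le hv.1 hc y.1 y.1.2 x.1 x.1.2 hj.le, by omega⟩

/-- Along the signature the row lengths weakly increase. -/
lemma len_le_of_nodeLT (hv : SortedV n l v) (hmp : IsMP l lam) (hc : Cylindrical n v lam)
    {r : ZMod n} {x y : Fin l × ℕ × Bool} (hx : IsNode n v lam r x) (hy : IsNode n v lam r y)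
    (hlt : nodeLT v lam x y) : lam x.1 x.2.1 ≤ lam y.1 y.2.1 := by
  obtain ⟨m, hm, hd⟩ := exists_shift hv hc hx hy hlt
  by_contra! h
  have hi : y.2.1 + m ≤ x.2.1 := by
    unfold nodeD at hd
    split_ifs at hd <;> omega
  have h1 := antitone_nat_of_succ_le (hmp x.1).1 hi
  have h2 := hm y.2.1
  omega

/-- Among nodes of rows of the same length, the removable ones precede the addable ones. -/
lemma flag_of_nodeLT (hv : SortedV n l v) (hmp : IsMP l lam) (hc : Cylindrical n v lam)
    {r : ZMod n} {x y : Fin l × ℕ × Bool} (hx : IsNode n v lam r x) (hy : IsNode n v lam r y)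
    (hlt : nodeLT v lam x y) (hlen : lam x.1 x.2.1 = lam y.1 y.2.1) (hyR : y.2.2 = true) :
    x.2.2 = true := by
  obtain ⟨m, hm, hd⟩ := exists_shift hv hc hx hy hlt
  by_contra hxA
  obtain ⟨hA, -⟩ := (hx.resolve_left fun h => hxA h.1).2
  have hi : y.2.1 + m + 1 ≤ x.2.1 := by
    simp only [nodeD, hxA, hyR, if_true, if_false] at hd
    omega
  have h1 := antitone_nat_of_succ_le (hmp x.1).1 (show y.2.1 + m ≤ x.2.1 - 1 by omega)
  have h2 := hm y.2.1
  omega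

end

/-! ### Counting nodes column by column -/

section
variable {n l : ℕ} {v : Fin l → ℕ} {lam : Fin l → ℕ → ℕ}

/-- The part of the signature consisting of the nodes at the end of rows longer than `k`. -/
def tailSig (lam : Fin l → ℕ → ℕ) (k : ℕ) (L : List (Fin l × ℕ × Bool)) :
    List (Fin l × ℕ × Bool) :=
  L.filter fun x => k + 1 ≤ lam x.1 x.2.1

/-- Passing from `k` to `k + 1` drops the nodes at the ends of rows of length exactly `k + 1`. -/
lemma bal_tailSig_succ (k : ℕ) (L : List (Fin l × ℕ × Bool)) :
    bal ((tailSig lam k L).map fun x => x.2.2) =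
      bal ((tailSig lam (k + 1) L).map fun x => x.2.2)
      + (((L.filter fun x => lam x.1 x.2.1 = k + 1 ∧ x.2.2 = true).length : ℤ)
      - ((L.filter fun x => lam x.1 x.2.1 = k + 1 ∧ x.2.2 = false).length : ℤ)) := by
  induction L with
  | nil => simp [tailSig]
  | cons x L ih =>
    obtain ⟨j, i, f⟩ := x
    simp only [tailSig] at ih ⊢
    rcases lt_trichotomy (lam j i) (k + 1) with h | h | h
    · simpa [List.filter_cons, show ¬ k < lam j i by omega,
        show ¬ k + 1 < lam j i by omega, show ¬ lam j i = k + 1 by omega] using ih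
    · cases f <;>
      · simp [h, bal_cons_true, bal_cons_false] at ih ⊢
        rw [ih]; ring
    · cases f <;>
      · simp [show k < lam j i by omega,
          show k + 1 < lam j i by omega, show ¬ lam j i = k + 1 by omega,
          bal_cons_true, bal_cons_false] at ih ⊢
        rw [ih]; ring

lemma IsSig.nodup {r : ZMod n} {L : List (Fin l × ℕ × Bool)} (hL : IsSig n v lam r L) :
    L.Nodup := by
  refine hL.1.imp fun {x y} h hxy => ?_
  subst hxy
  rcases h with h | ⟨-, h⟩ <;> exact lt_irrefl _ h

/-- Removable `r`-nodes in column `k + 1` correspond to the components whose column `k + 1` has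
`v j + k - colHt (lam j) (k + 1) ≡ r - 1` and is strictly higher than the next column. -/
lemma length_rem (hmp : IsMP l lam) {r : ZMod n} {L : List (Fin l × ℕ × Bool)}
    (hL : IsSig n v lam r L) (k : ℕ) :
    (L.filter fun x => lam x.1 x.2.1 = k + 1 ∧ x.2.2 = true).length =
      (Finset.univ.filter fun j : Fin l =>
        (v j : ZMod n) + (k : ZMod n) - (colHt (lam j) (k + 1) : ZMod n) = r - 1 ∧
          colHt (lam j) (k + 2) < colHt (lam j) (k + 1)).card := by
  classical
  have hg : Function.Injective
      fun j : Fin l => ((j, colHt (lam j) (k + 1) - 1, true) : Fin l × ℕ × Bool) :=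
    fun a b h => (Prod.ext_iff.1 h).1
  rw [← List.toFinset_card_of_nodup (hL.nodup.filter _), ← Finset.card_image_of_injective _ hg]
  congr 1
  ext ⟨j, i, f⟩
  have hk1 := fun i => le_iff_lt_colHt (hmp j) (m := k + 1) (by omega) i
  have hk2 := fun i => le_iff_lt_colHt (hmp j) (m := k + 2) (by omega) i
  simp only [List.mem_toFinset, List.mem_filter, hL.2, decide_eq_true_eq, Finset.mem_image,
    Finset.mem_filter, Finset.mem_univ, true_and, Prod.mk.injEq]
  constructor
  · rintro ⟨hx, hlen, rfl⟩
    obtain ⟨-, h2, h3⟩ := (hx.resolve_right (by simp)).2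
    have a1 := hk1 i
    have a2 := hk2 i
    have a3 := hk1 (i + 1)
    have hh : colHt (lam j) (k + 1) = i + 1 := by omega
    refine ⟨j, ⟨?_, by omega⟩, rfl, by omega, rfl⟩
    rw [← h3, hlen, hh]; simp [colour]; ring
  · rintro ⟨j', ⟨h2, h1⟩, rfl, hi, rfl⟩
    have a1 := hk1 i
    have a2 := hk2 i
    have a3 := hk1 (i + 1)
    have hlen : lam j' i = k + 1 := by omega
    have hh : colHt (lam j') (k + 1) = i + 1 := by omega
    refine ⟨Or.inl ⟨rfl, by omega, by omega, ?_⟩, hlen, rfl⟩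
    rw [hh] at h2
    rw [show r = r - 1 + 1 by ring, ← h2]
    simp [colour, hlen]; ring

/-- Addable `r`-nodes in column `k + 2` correspond to the components whose column `k + 2` has
`v j + (k + 1) - colHt (lam j) (k + 2) ≡ r` and is strictly lower than the previous column. -/
lemma length_add (hmp : IsMP l lam) {r : ZMod n} {L : List (Fin l × ℕ × Bool)}
    (hL : IsSig n v lam r L) (k : ℕ) :
    (L.filter fun x => lam x.1 x.2.1 = k + 1 ∧ x.2.2 = false).length =
      (Finset.univ.filter fun j : Fin l =>
        (v j : ZMod n) + ((k + 1 : ℕ) : ZMod n) - (colHt (lam j) (k + 2) : ZMod n) = r ∧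
          colHt (lam j) (k + 2) < colHt (lam j) (k + 1)).card := by
  classical
  have hg : Function.Injective
      fun j : Fin l => ((j, colHt (lam j) (k + 2), false) : Fin l × ℕ × Bool) :=
    fun a b h => (Prod.ext_iff.1 h).1
  rw [← List.toFinset_card_of_nodup (hL.nodup.filter _), ← Finset.card_image_of_injective _ hg]
  congr 1
  ext ⟨j, i, f⟩
  have hk1 := fun i => le_iff_lt_colHt (hmp j) (m := k + 1) (by omega) i
  have hk2 := fun i => le_iff_lt_colHt (hmp j) (m := k + 2) (by omega) i
  simp only [List.mem_toFinset, List.mem_filter, hL.2, decide_eq_true_eq, Finset.mem_image,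
    Finset.mem_filter, Finset.mem_univ, true_and, Prod.mk.injEq]
  have a1 := hk1 i
  have a2 := hk2 i
  have a3 := hk2 (i - 1)
  constructor
  · rintro ⟨hx, hlen, rfl⟩
    obtain ⟨h2, h3⟩ := (hx.resolve_left (by simp)).2
    have hh : colHt (lam j) (k + 2) = i := by omega
    refine ⟨j, ⟨?_, by omega⟩, rfl, by omega, rfl⟩
    rw [← h3, hlen, hh]; simp [colour]; ring
  · rintro ⟨j', ⟨h2, h1⟩, rfl, hi, rfl⟩
    have hlen : lam j' i = k + 1 := by omega
    refine ⟨Or.inr ⟨rfl, by omega, ?_⟩, hlen, rfl⟩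
    rw [hi] at h2
    rw [← h2]
    simp [colour, hlen]; ring

lemma eFun_eq_card (k : ℕ) (i : ZMod n) :
    eFun n v lam k i = (Finset.univ.filter fun j : Fin l =>
      (v j : ZMod n) + (k : ZMod n) - (colHt (lam j) (k + 1) : ZMod n) = i).card := by
  classical
  rw [eFun, Nat.card_eq_fintype_card, Fintype.card_subtype]

/-- Removable minus addable `r`-nodes at the ends of rows of length `k + 1`: the components whose
columns `k + 1` and `k + 2` have the same height contribute equally to both terms on the right. -/
lemma rem_sub_add (hmp : IsMP l lam) {r : ZMod n} {L : List (Fin l × ℕ × Bool)}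
    (hL : IsSig n v lam r L) (k : ℕ) :
    (((L.filter fun x => lam x.1 x.2.1 = k + 1 ∧ x.2.2 = true).length : ℤ)
      - ((L.filter fun x => lam x.1 x.2.1 = k + 1 ∧ x.2.2 = false).length : ℤ)) =
      (eFun n v lam k (r - 1) : ℤ) - (eFun n v lam (k + 1) r : ℤ) := by
  classical
  rw [length_rem hmp hL, length_add hmp hL, eFun_eq_card, eFun_eq_card]
  rw [← Finset.card_filter_add_card_filter_not (s := Finset.univ.filter fun j : Fin l =>
      (v j : ZMod n) + (k : ZMod n) - (colHt (lam j) (k + 1) : ZMod n) = r - 1)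
      (fun j => colHt (lam j) (k + 2) < colHt (lam j) (k + 1)),
    ← Finset.card_filter_add_card_filter_not (s := Finset.univ.filter fun j : Fin l =>
      (v j : ZMod n) + ((k + 1 : ℕ) : ZMod n) - (colHt (lam j) (k + 1 + 1) : ZMod n) = r)
      (fun j => colHt (lam j) (k + 2) < colHt (lam j) (k + 1))]
  simp only [Finset.filter_filter]
  have key : (Finset.univ.filter fun j : Fin l =>
      (v j : ZMod n) + (k : ZMod n) - (colHt (lam j) (k + 1) : ZMod n) = r - 1 ∧
        ¬ colHt (lam j) (k + 2) < colHt (lam j) (k + 1)) =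
      Finset.univ.filter fun j : Fin l =>
      (v j : ZMod n) + ((k + 1 : ℕ) : ZMod n) - (colHt (lam j) (k + 1 + 1) : ZMod n) = r ∧
        ¬ colHt (lam j) (k + 2) < colHt (lam j) (k + 1) := by
    ext j
    simp only [Finset.mem_filter, Finset.mem_univ, true_and]
    refine and_congr_left fun h => ?_
    have : colHt (lam j) (k + 1 + 1) = colHt (lam j) (k + 1) :=
      le_antisymm (colHt_succ_le (hmp j) k) (not_lt.1 h)
    rw [this]
    push_cast
    constructor <;> intro h
    · linear_combination h
    · linear_combination h
  rw [key]
  have cancel : ∀ A B C : ℕ, (A : ℤ) - B = ((A + C : ℕ) : ℤ) - ((B + C : ℕ) : ℤ) := by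
    intros; push_cast; ring
  exact cancel _ _ _

lemma sum_eFun [NeZero n] (k : ℕ) : ∑ i, eFun n v lam k i = l := by
  classical
  simp only [eFun_eq_card]
  rw [← Finset.card_eq_sum_card_fiberwise (fun _ _ => Finset.mem_coe.2 (Finset.mem_univ _))]
  simp

/-- A step weight of level `l` has only one preimage of total sum `l`. -/
lemma stepWt_injective [NeZero n] {e e' : ZMod n → ℕ} (hs : ∑ i, e i = ∑ i, e' i)
    (h : stepWt n e = stepWt n e') : e = e' := by
  have hstep : ∀ j, (e j : ℤ) - e' j = (e (j - 1) : ℤ) - e' (j - 1) := fun j => by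
    have := congrFun h j
    simp only [stepWt] at this
    omega
  have hconst : ∀ m : ℕ, (e (m : ZMod n) : ℤ) - e' (m : ZMod n) = (e 0 : ℤ) - e' 0 := by
    intro m
    induction m with
    | zero => simp
    | succ m ih => rw [← ih, hstep]; simp
  have hconst' : ∀ j : ZMod n, (e j : ℤ) - e' j = (e 0 : ℤ) - e' 0 := fun j => by
    rw [← hconst j.val, ZMod.natCast_zmod_val]
  have hsum : ∑ i, ((e i : ℤ) - e' i) = 0 := by
    rw [Finset.sum_sub_distrib]
    exact_mod_cast sub_eq_zero.2 (congrArg (Nat.cast : ℕ → ℤ) hs)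
  rw [Finset.sum_congr rfl fun j _ => hconst' j] at hsum
  rw [Finset.sum_const, Finset.card_univ, ZMod.card, nsmul_eq_mul] at hsum
  have h0 := (mul_eq_zero.1 hsum).resolve_left (by exact_mod_cast NeZero.ne n)
  funext j
  have := hconst' j
  omega

/-- The number `η̂_k(r) - p_k(r)` is the balance of the nodes at the ends of rows longer
than `k`. Both sides have the same increments in `k` and vanish for large `k`. -/
lemma bal_tailSig (hmp : IsMP l lam) {p : ℕ → ZMod n → ℤ} (hpi : IsPi n v lam p) {r : ZMod n}
    {L : List (Fin l × ℕ × Bool)} (hL : IsSig n v lam r L) (k : ℕ) :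
    bal ((tailSig lam k L).map fun x => x.2.2) = (eFun n v lam k r : ℤ) - p k r := by
  obtain ⟨hstep, K, hK⟩ := hpi
  set F : ℕ → ℤ := fun k =>
    bal ((tailSig lam k L).map fun x => x.2.2) - ((eFun n v lam k r : ℤ) - p k r) with hF
  have hsucc : ∀ k, F (k + 1) = F k := by
    intro k
    have h1 := congrFun (hstep k) r
    simp only [stepWt] at h1
    simp only [hF]
    rw [bal_tailSig_succ k, rem_sub_add hmp hL]
    linarith
  have hconst : ∀ m, F (k + m) = F k := by
    intro m
    induction m with
    | zero => rfl
    | succ m ih => exact (hsucc (k + m)).trans ih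
  -- A bound for all row lengths: the sum of the first rows of the components.
  set M := ∑ j, lam j 0 with hM
  have hlam : ∀ j i, lam j i ≤ M := fun j i =>
    (antitone_nat_of_succ_le (hmp j).1 (Nat.zero_le i)).trans
      (Finset.single_le_sum (f := fun j => lam j 0) (fun _ _ => Nat.zero_le _)
        (Finset.mem_univ j))
  have hzero : F (k + (K + M)) = 0 := by
    have h1 : tailSig lam (k + (K + M)) L = [] := by
      refine List.filter_eq_nil_iff.2 fun x _ => ?_
      have := hlam x.1 x.2.1
      simp only [decide_eq_true_eq]
      omega
    have h2 : (eFun n v lam (k + (K + M)) r : ℤ) = p (k + (K + M)) r := by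
      rw [hK _ (by omega), eFun_eq_card, gsp, wtOf]
      congr 2
      ext j
      have := hlam j 0
      rw [Finset.mem_filter, Finset.mem_filter,
        colHt_eq_zero (hmp j) (k := k + (K + M)) (by omega)]
      simp [eq_sub_iff_add_eq]
    simp [hF, h1, h2, bal]
  have := (hconst (K + M)).symm.trans hzero
  simp only [hF] at this
  linarith

/-- The nodes at the ends of rows longer than `k` form a suffix of the signature. -/
lemma exists_append_tailSig (hv : SortedV n l v) (hmp : IsMP l lam) (hc : Cylindrical n v lam)
    {r : ZMod n} {L : List (Fin l × ℕ × Bool)} (hpw : L.Pairwise (nodeLT v lam))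
    (hn : ∀ x ∈ L, IsNode n v lam r x) (k : ℕ) : ∃ T, L = T ++ tailSig lam k L := by
  induction L with
  | nil => exact ⟨[], rfl⟩
  | cons x L ih =>
    rw [List.pairwise_cons] at hpw
    by_cases hx : k + 1 ≤ lam x.1 x.2.1
    · refine ⟨[], ?_⟩
      rw [tailSig, List.filter_eq_self.2]
      · rfl
      · intro y hy
        rcases List.mem_cons.1 hy with rfl | hy'
        · simpa using hx
        · have := len_le_of_nodeLT hv hmp hc (hn x (by simp)) (hn y hy) (hpw.1 y hy')
          simp only [decide_eq_true_eq]
          omega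
    · obtain ⟨T, hT⟩ := ih hpw.2 fun y hy => hn y (List.mem_cons_of_mem _ hy)
      refine ⟨x :: T, ?_⟩
      rw [tailSig, List.filter_cons_of_neg (by simpa using hx), List.cons_append]
      exact congrArg _ hT

/-- The maximal suffix balance of the signature is attained on the empty suffix or on one of the
suffixes `tailSig`: a nonempty optimal suffix can be taken to start with a removable node `x`, and
the nodes to its left in rows of the same length are removable, so that prepending them does not
decrease the balance. -/
lemma exists_sufMax_le_bal_tailSig (hv : SortedV n l v) (hmp : IsMP l lam)
    (hc : Cylindrical n v lam) {r : ZMod n} {L : List (Fin l × ℕ × Bool)}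
    (hL : IsSig n v lam r L) :
    sufMax (L.map fun x => x.2.2) ≤ 0 ∨
      ∃ k, sufMax (L.map fun x => x.2.2) ≤ bal ((tailSig lam k L).map fun x => x.2.2) := by
  have hn : ∀ x ∈ L, IsNode n v lam r x := fun x hx => (hL.2 x).1 hx
  obtain ⟨t, s, hw, hs, hs' | ⟨s', hs'⟩⟩ := exists_suffix_eq_sufMax (L.map fun x => x.2.2)
  · left
    rw [← hs, hs']
    simp [bal]
  · right
    obtain ⟨T, S, hTS, rfl, rfl⟩ := List.map_eq_append_iff.1 hw
    obtain ⟨x, S', rfl, hxR, -⟩ := List.map_eq_cons_iff.1 hs'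
    subst hTS
    have hxn := hn x (by simp)
    have hx1 : 1 ≤ lam x.1 x.2.1 := (hxn.resolve_right (by simp [hxR])).2.1
    have hpw := List.pairwise_append.1 hL.1
    refine ⟨lam x.1 x.2.1 - 1, ?_⟩
    have hS : tailSig lam (lam x.1 x.2.1 - 1) (x :: S') = x :: S' := by
      refine List.filter_eq_self.2 fun y hy => ?_
      have : lam x.1 x.2.1 ≤ lam y.1 y.2.1 := by
        rcases List.mem_cons.1 hy with rfl | hy'
        · exact le_rfl
        · exact len_le_of_nodeLT hv hmp hc hxn (hn y (by simp [hy']))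
            ((List.pairwise_cons.1 hpw.2.1).1 y hy')
      simp only [decide_eq_true_eq]
      omega
    have happ : tailSig lam (lam x.1 x.2.1 - 1) (T ++ x :: S') =
        tailSig lam (lam x.1 x.2.1 - 1) T ++ (x :: S') := by
      conv_rhs => rw [← hS]
      exact List.filter_append _ _
    rw [happ, ← hs, List.map_append, bal_append]
    refine le_add_of_nonneg_left (bal_nonneg_of_forall _ fun f hf => ?_)
    obtain ⟨y, hy, rfl⟩ := List.mem_map.1 hf
    obtain ⟨hyT, hylen⟩ := List.mem_filter.1 hy
    have hyn := hn y (by simp [hyT])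
    have hlt := hpw.2.2 y hyT x (by simp)
    have hle := len_le_of_nodeLT hv hmp hc hyn hxn hlt
    simp only [decide_eq_true_eq] at hylen
    exact flag_of_nodeLT hv hmp hc hyn hxn hlt (by omega) hxR

end

/-- the number of normal removable `r`-nodes of `λ(p)` (the number of
removable nodes surviving the reduction of the `r`-signature, i.e. the number of `true`s
in the reduced word) equals `max_{k ≥ 0} |p_k - η̂_k|⁻_r`. -/
theorem epsilon_eq_max (n : ℕ) [NeZero n] (hn : 2 ≤ n) (l : ℕ)
    (v : Fin l → ℕ) (hv : SortedV n l v) (lam : Fin l → ℕ → ℕ) (p : ℕ → ZMod n → ℤ)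
    (hHL : IsHL n v lam p) (r : ZMod n)
    (L : List (Fin l × ℕ × Bool)) (hL : IsSig n v lam r L)
    (w : List Bool) (hred : Relation.ReflTransGen SigStep (L.map fun x => x.2.2) w)
    (a b : ℕ) (hw : w = List.replicate a false ++ List.replicate b true) :
    b = sSup {m : ℕ | ∃ (k : ℕ) (e : ZMod n → ℕ), (∑ i, e i) = l ∧
      ((fun i => p (k + 1) i - p k i) = stepWt n e) ∧
      m = ((e r : ℤ) - p k r).toNat} := by
  obtain ⟨hmp, hc, hpi, -⟩ := hHL
  have hb : sufMax (L.map fun x => x.2.2) = b := by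
    rw [sufMax_of_reduces hred, hw, sufMax_reduced]
  have hle : ∀ k, (eFun n v lam k r : ℤ) - p k r ≤ b := fun k => by
    obtain ⟨T, hT⟩ := exists_append_tailSig hv hmp hc hL.1 (fun x hx => (hL.2 x).1 hx) k
    rw [← bal_tailSig hmp hpi hL, ← hb]
    conv_rhs => rw [hT, List.map_append]
    exact bal_le_sufMax_append _ _
  refine (IsGreatest.csSup_eq ⟨?_, ?_⟩).symm
  · rcases exists_sufMax_le_bal_tailSig hv hmp hc hL with h | ⟨k, hk⟩
    · refine ⟨0, eFun n v lam 0, sum_eFun 0, hpi.1 0, ?_⟩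
      have := hle 0
      omega
    · rw [hb, bal_tailSig hmp hpi hL] at hk
      refine ⟨k, eFun n v lam k, sum_eFun k, hpi.1 k, ?_⟩
      have := hle k
      omega
  · rintro m ⟨k, e, he, hstep, rfl⟩
    obtain rfl : e = eFun n v lam k :=
      stepWt_injective (he.trans (sum_eFun k).symm) (hstep.symm.trans (hpi.1 k))
    have := hle k
    omega

end BF
end
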